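/- arXiv:2505.06143 — 4 statements merged into one kernel-verified Lean document; each statement's English description precedes it below -/
import Mathlib

section
/- Let λ_1, …, λ_N be distinct real numbers, T > 0, and let F_1^T ⊂ L²(0,T) be the linear span of the functions t ↦ S(T−t, λ_k), k = 1, …, N. Then F_1^T has dimension N and the linear map Φ : F_1^T → ℝ^N defined by Φ(f) = (∫_0^T f(τ) S(T−τ, λ_1) dτ, …, ∫_0^T f(τ) S(T−τ, λ_N) dτ) is a bijection. Consequently, for an N×N Jacobi matrix A with spectral data (λ_k, φ_k, ρ_k) as in the context, for every a ∈ ℝ^N there exists a unique f ∈ F_1^T with u^f(T) = a, i.e. the control operator W^T maps F_1^T onto ℝ^N isomorphically. -/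
open MeasureTheory Real Matrix

/-- `S t λ` solves `S'' = -λ S`, `S 0 = 0`, `S' 0 = 1`. -/
noncomputable def S (t lam : ℝ) : ℝ :=
  if 0 < lam then Real.sin (Real.sqrt lam * t) / Real.sqrt lam
  else if lam < 0 then Real.sinh (Real.sqrt (-lam) * t) / Real.sqrt (-lam)
  else t

/-- An `N × N` Jacobi matrix: real symmetric tridiagonal with positive off-diagonal entries. -/
def IsJacobi {N : ℕ} (A : Matrix (Fin N) (Fin N) ℝ) : Prop :=
  (∀ i j, A i j = A j i) ∧
  (∀ i j : Fin N, (i : ℕ) + 1 < (j : ℕ) → A i j = 0) ∧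
  (∀ i j : Fin N, (i : ℕ) + 1 = (j : ℕ) → 0 < A i j)

/-- cosine-type companion of `S`. -/
noncomputable def Caux (t lam : ℝ) : ℝ :=
  if 0 < lam then Real.cos (Real.sqrt lam * t)
  else if lam < 0 then Real.cosh (Real.sqrt (-lam) * t)
  else 1

theorem S_hasDerivAt (lam t : ℝ) : HasDerivAt (fun x => S x lam) (Caux t lam) t := by
  unfold S Caux
  split_ifs with h1 h2
  · have h := Real.sqrt_pos.mpr h1
    have := ((Real.hasDerivAt_sin (Real.sqrt lam * t)).comp t
      ((hasDerivAt_id t).const_mul (Real.sqrt lam))).div_const (Real.sqrt lam)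
    refine this.congr_deriv ?_
    field_simp
  · have h := Real.sqrt_pos.mpr (neg_pos.mpr h2)
    have := ((Real.hasDerivAt_sinh (Real.sqrt (-lam) * t)).comp t
      ((hasDerivAt_id t).const_mul (Real.sqrt (-lam)))).div_const (Real.sqrt (-lam))
    refine this.congr_deriv ?_
    field_simp
  · exact hasDerivAt_id t

theorem Caux_hasDerivAt (lam t : ℝ) : HasDerivAt (fun x => Caux x lam) (-lam * S t lam) t := by
  unfold S Caux
  split_ifs with h1 h2
  · have h := Real.sqrt_pos.mpr h1
    have hs := Real.mul_self_sqrt h1.le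
    have := ((Real.hasDerivAt_cos (Real.sqrt lam * t)).comp t
      ((hasDerivAt_id t).const_mul (Real.sqrt lam)))
    refine this.congr_deriv ?_
    nth_rewrite 3 [← hs]
    field_simp
  · have h := Real.sqrt_pos.mpr (neg_pos.mpr h2)
    have hs := Real.mul_self_sqrt (neg_pos.mpr h2).le
    have := ((Real.hasDerivAt_cosh (Real.sqrt (-lam) * t)).comp t
      ((hasDerivAt_id t).const_mul (Real.sqrt (-lam))))
    refine this.congr_deriv ?_
    generalize Real.sqrt (-lam) = r at *
    rw [← hs]
    field_simp
  · have : lam = 0 := le_antisymm (not_lt.mp h1) (not_lt.mp h2)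
    simpa [this] using hasDerivAt_const t (1:ℝ)

theorem S_continuous (lam : ℝ) : Continuous (fun x => S x lam) :=
  continuous_iff_continuousAt.mpr fun t => (S_hasDerivAt lam t).continuousAt

theorem Caux_zero (lam : ℝ) : Caux 0 lam = 1 := by
  unfold Caux; split_ifs <;> simp

theorem S_zero (lam : ℝ) : S 0 lam = 0 := by
  unfold S; split_ifs <;> simp

theorem S_exists_ne (lam T : ℝ) (hT : 0 < T) : ∃ x ∈ Set.Ioo 0 T, S x lam ≠ 0 := by
  by_contra hcon
  push Not at hcon
  have h1 : HasDerivWithinAt (fun x => S x lam) 1 (Set.Ioi 0) 0 := by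
    have := (S_hasDerivAt lam 0).hasDerivWithinAt (s := Set.Ioi 0)
    rwa [Caux_zero] at this
  have h2 : HasDerivWithinAt (fun x => S x lam) 0 (Set.Ioi 0) 0 := by
    refine (hasDerivWithinAt_const (0:ℝ) (Set.Ioi 0) (0:ℝ)).congr_of_eventuallyEq ?_ (S_zero lam)
    filter_upwards [Ioo_mem_nhdsGT hT] with x hx using hcon x hx
  have := (uniqueDiffWithinAt_Ioi (0:ℝ)).eq_deriv _ h1 h2
  norm_num at this

theorem deriv_zero_on {f f' : ℝ → ℝ} {T : ℝ} (h : ∀ x ∈ Set.Ioo 0 T, f x = 0)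
    (hd : ∀ x, HasDerivAt f (f' x) x) : ∀ x ∈ Set.Ioo 0 T, f' x = 0 := by
  intro x hx
  refine (hd x).unique ((hasDerivAt_const x (0:ℝ)).congr_of_eventuallyEq ?_)
  filter_upwards [Ioo_mem_nhds hx.1 hx.2] with y hy using h y hy

theorem comb_pow {N : ℕ} (lam : Fin N → ℝ) (T : ℝ) (c : Fin N → ℝ)
    (h : ∀ x ∈ Set.Ioo 0 T, ∑ k, c k * S x (lam k) = 0) (j : ℕ) :
    ∀ x ∈ Set.Ioo 0 T, ∑ k, c k * (-lam k) ^ j * S x (lam k) = 0 := by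
  induction j with
  | zero => simpa using h
  | succ j ih =>
    have h1 := deriv_zero_on (f' := fun x => ∑ k, c k * (-lam k) ^ j * Caux x (lam k)) ih
      (fun x => HasDerivAt.fun_sum fun k _ => (S_hasDerivAt (lam k) x).const_mul _)
    have h2 := deriv_zero_on (f' := fun x => ∑ k, c k * (-lam k) ^ j * (-lam k * S x (lam k))) h1
      (fun x => HasDerivAt.fun_sum fun k _ => (Caux_hasDerivAt (lam k) x).const_mul _)
    intro x hx
    rw [← h2 x hx]
    exact Finset.sum_congr rfl fun k _ => by ring

theorem comb_indep {N : ℕ} (lam : Fin N → ℝ) (hlam : Function.Injective lam) (T : ℝ) (hT : 0 < T)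
    (c : Fin N → ℝ)
    (h : ∀ x ∈ Set.Ioo 0 T, ∑ k, c k * S x (lam k) = 0) : c = 0 := by
  funext k
  obtain ⟨x, hx, hne⟩ := S_exists_ne (lam k) T hT
  have hv : (fun k => c k * S x (lam k)) = 0 := by
    apply Matrix.eq_zero_of_forall_pow_sum_mul_pow_eq_zero (f := fun k => -lam k)
    · exact fun a b hab => hlam (neg_injective hab)
    · intro i
      rw [← comb_pow lam T c h i x hx]
      exact Finset.sum_congr rfl fun k _ => by ring
  have := congrFun hv k
  simpa [hne] using this

theorem comb_gram {N : ℕ} (lam : Fin N → ℝ) (hlam : Function.Injective lam) (T : ℝ) (hT : 0 < T)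
    (c : Fin N → ℝ)
    (h : ∀ k, ∫ τ in (0:ℝ)..T, (∑ j, c j * S (T - τ) (lam j)) * S (T - τ) (lam k) = 0) :
    c = 0 := by
  have hc : ∀ l, Continuous fun τ => S (T - τ) l := fun l =>
    (S_continuous l).comp (continuous_const.sub continuous_id)
  have hg : Continuous fun τ => ∑ j, c j * S (T - τ) (lam j) :=
    continuous_finsetSum _ fun j _ => continuous_const.mul (hc _)
  have h2 : ∫ τ in (0:ℝ)..T, (∑ j, c j * S (T - τ) (lam j)) ^ 2 = 0 := by
    have : ∀ τ, (∑ j, c j * S (T - τ) (lam j)) ^ 2 =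
        ∑ k, c k * ((∑ j, c j * S (T - τ) (lam j)) * S (T - τ) (lam k)) := by
      intro τ
      rw [sq]
      rw [Finset.mul_sum]
      exact Finset.sum_congr rfl fun k _ => by ring
    simp_rw [this]
    rw [intervalIntegral.integral_finsetSum]
    · simp_rw [intervalIntegral.integral_const_mul, h]
      simp
    · exact fun k _ => (continuous_const.mul (hg.mul (hc _))).intervalIntegrable _ _
  apply comb_indep lam hlam T hT
  intro x hx
  by_contra hne
  have := intervalIntegral.integral_pos (f := fun τ => (∑ j, c j * S (T - τ) (lam j)) ^ 2) hT
    (hg.pow 2).continuousOn (fun _ _ => sq_nonneg _)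
    ⟨T - x, ⟨by linarith [hx.2], by linarith [hx.1]⟩, by
      simp only [sub_sub_cancel]; positivity⟩
  linarith

theorem stmt2 {N : ℕ} (hN : 0 < N) (lam : Fin N → ℝ) (hlam : Function.Injective lam)
    (T : ℝ) (hT : 0 < T)
    (F1 : Submodule ℝ (ℝ → ℝ))
    (hF1 : F1 = Submodule.span ℝ (Set.range fun k : Fin N => fun t : ℝ => S (T - t) (lam k)))
    (Φ : (ℝ → ℝ) → (Fin N → ℝ))
    (hΦ : Φ = fun f => fun k => ∫ τ in (0:ℝ)..T, f τ * S (T - τ) (lam k))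
    (A : Matrix (Fin N) (Fin N) ℝ) (hA : IsJacobi A)
    (φ : Fin N → Fin N → ℝ) (ρ : Fin N → ℝ)
    (hmono : StrictMono lam)
    (heig : ∀ k, A.mulVec (φ k) = lam k • φ k)
    (hφ1 : ∀ k, φ k ⟨0, hN⟩ = 1)
    (hρ : ∀ k, ρ k = ∑ i, φ k i * φ k i) :
    Module.finrank ℝ F1 = N ∧
    Set.BijOn Φ (F1 : Set (ℝ → ℝ)) Set.univ ∧
    ∀ a : Fin N → ℝ, ∃! g : ℝ → ℝ, g ∈ F1 ∧
      (∑ k, ((1 / ρ k) * ∫ τ in (0:ℝ)..T, g τ * S (T - τ) (lam k)) • φ k) = a := by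
  have hc : ∀ l, Continuous fun τ => S (T - τ) l := fun l =>
    (S_continuous l).comp (continuous_const.sub continuous_id)
  let G := Fintype.linearCombination ℝ (fun k : Fin N => fun t : ℝ => S (T - t) (lam k))
  have hG : ∀ c t, G c t = ∑ j, c j * S (T - t) (lam j) := by
    intro c t
    simp [G, Fintype.linearCombination_apply, Finset.sum_apply]
  have hF : F1 = LinearMap.range G := by
    rw [hF1, Fintype.range_linearCombination]
  let M : Matrix (Fin N) (Fin N) ℝ :=
    Matrix.of fun k j => ∫ τ in (0:ℝ)..T, S (T - τ) (lam j) * S (T - τ) (lam k)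
  have hM : ∀ c, Φ (G c) = M.mulVecLin c := by
    intro c
    funext k
    simp only [hΦ, hG, M, Matrix.mulVecLin_apply, Matrix.mulVec, dotProduct, Matrix.of_apply,
      Finset.sum_mul]
    rw [intervalIntegral.integral_finsetSum]
    · refine Finset.sum_congr rfl fun j _ => ?_
      simp_rw [mul_assoc]
      rw [intervalIntegral.integral_const_mul, mul_comm]
    · exact fun j _ => ((continuous_const.mul (hc _)).mul (hc _)).intervalIntegrable _ _
  have hMinj : Function.Injective M.mulVecLin := by
    rw [← LinearMap.ker_eq_bot, LinearMap.ker_eq_bot']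
    intro c h0
    apply comb_gram lam hlam T hT
    intro k
    have := congrFun ((hM c).trans h0) k
    simpa only [hΦ, hG, Pi.zero_apply] using this
  have hMsurj : Function.Surjective M.mulVecLin := LinearMap.injective_iff_surjective.mp hMinj
  have hGinj : Function.Injective G := by
    intro a b hab
    apply hMinj
    rw [← hM, ← hM, hab]
  have hbij : Set.BijOn Φ (F1 : Set (ℝ → ℝ)) Set.univ := by
    refine ⟨fun _ _ => Set.mem_univ _, ?_, ?_⟩
    · intro f hf g hg hfg
      rw [hF] at hf hg
      obtain ⟨a, rfl⟩ := hf
      obtain ⟨b, rfl⟩ := hg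
      rw [hM, hM] at hfg
      rw [hMinj hfg]
    · intro y _
      obtain ⟨c, rfl⟩ := hMsurj y
      exact ⟨G c, by rw [hF]; exact ⟨c, rfl⟩, hM c⟩
  refine ⟨?_, hbij, ?_⟩
  · rw [hF, LinearMap.finrank_range_of_inj hGinj]
    simp
  · intro a
    have hρpos : ∀ k, 0 < ρ k := by
      intro k
      rw [hρ]
      refine Finset.sum_pos' (fun i _ => mul_self_nonneg _) ⟨⟨0, hN⟩, Finset.mem_univ _, ?_⟩
      simp [hφ1]
    have hli : LinearIndependent ℝ φ := by
      apply Module.End.eigenvectors_linearIndependent' A.mulVecLin lam hlam φ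
      intro k
      refine ⟨Module.End.mem_eigenspace_iff.mpr (heig k), fun h0 => ?_⟩
      have := hφ1 k
      simp [h0] at this
    have hLinj : Function.Injective (Fintype.linearCombination ℝ φ) :=
      hli.fintypeLinearCombination_injective
    have hLsurj : Function.Surjective (Fintype.linearCombination ℝ φ) :=
      LinearMap.injective_iff_surjective.mp hLinj
    have hW : ∀ g : ℝ → ℝ, (∑ k, ((1 / ρ k) * ∫ τ in (0:ℝ)..T, g τ * S (T - τ) (lam k)) • φ k)
        = Fintype.linearCombination ℝ φ (fun k => (1 / ρ k) * Φ g k) := by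
      intro g
      rw [Fintype.linearCombination_apply, hΦ]
    obtain ⟨d, hd⟩ := hLsurj a
    obtain ⟨g, hg, hgd⟩ := hbij.surjOn (Set.mem_univ (fun k => ρ k * d k))
    refine ⟨g, ⟨hg, ?_⟩, ?_⟩
    · rw [hW, hgd, ← hd]
      congr 1
      funext k
      have := (hρpos k).ne'
      field_simp
    · rintro g' ⟨hg', he⟩
      apply hbij.injOn hg' hg
      rw [hW, ← hd] at he
      have := hLinj he
      rw [hgd]
      funext k
      have h1 := congrFun this k
      have := (hρpos k).ne'
      rw [← h1]
      field_simp
end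

section
/- Given distinct real numbers λ_1 < … < λ_N and positive numbers ρ_1, …, ρ_N with Σ_{k=1}^N 1/ρ_k = 1, there exists a unique N×N Jacobi matrix A (real symmetric tridiagonal with positive off-diagonal entries) whose eigenvalues are exactly λ_1, …, λ_N and whose eigenvectors φ_k, normalized so that (φ_k)_1 = 1, satisfy ⟨φ_k, φ_k⟩ = ρ_k for each k. Consequently, a function r is the response function of the dynamical system associated with some N×N Jacobi matrix if and only if r(t) = Σ_{k=1}^N (1/ρ_k) S(t, λ_k) for such data (λ_k, ρ_k). -/
open MeasureTheory Real Matrix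

open InnerProductSpace in
theorem exists_lanczos {N : ℕ} (hN : 0 < N) (lam w : Fin N → ℝ)
    (hlam : StrictMono lam) (hw : ∀ k, 0 < w k) (hsum : ∑ k, w k = 1) :
    ∃ e : Fin N → Fin N → ℝ,
      (∀ i j, ∑ k, e i k * e j k = if i = j then 1 else 0) ∧
      (∀ i j : Fin N, (j : ℕ) + 1 < i → ∑ k, e i k * (lam k * e j k) = 0) ∧
      (∀ i j : Fin N, (j : ℕ) + 1 = i → 0 < ∑ k, e i k * (lam k * e j k)) ∧
      (∀ k, e ⟨0, hN⟩ k = Real.sqrt (w k)) := by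
  let v : Fin N → EuclideanSpace ℝ (Fin N) :=
    fun i => WithLp.toLp 2 (fun k => Real.sqrt (w k) * lam k ^ (i : ℕ))
  let L : EuclideanSpace ℝ (Fin N) →ₗ[ℝ] EuclideanSpace ℝ (Fin N) :=
    { toFun := fun x => WithLp.toLp 2 (fun k => lam k * x k)
      map_add' := by intro x y; ext k; simp [mul_add]
      map_smul' := by intro c x; ext k; simp; ring }
  have hLv : ∀ i j : Fin N, (j : ℕ) + 1 = i → L (v j) = v i := by
    intro i j h
    ext k
    simp only [L, v, LinearMap.coe_mk, AddHom.coe_mk, ← h, pow_succ]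
    ring
  have hinner : ∀ x y : EuclideanSpace ℝ (Fin N), inner ℝ x y = ∑ k, x k * y k := by
    intro x y
    simp [PiLp.inner_apply, mul_comm]
  have hv : LinearIndependent ℝ v := by
    rw [Fintype.linearIndependent_iff]
    intro g hg
    have h0 : g = 0 := by
      apply Matrix.eq_zero_of_forall_index_sum_mul_pow_eq_zero hlam.injective
      intro k
      have h1 := congrArg (fun x : EuclideanSpace ℝ (Fin N) => x k) hg
      have h2 : Real.sqrt (w k) ≠ 0 := (Real.sqrt_pos.2 (hw k)).ne'
      simp only [v, PiLp.zero_apply, WithLp.ofLp_sum, Finset.sum_apply, PiLp.smul_apply,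
        smul_eq_mul] at h1
      apply mul_left_cancel₀ h2
      rw [mul_zero, ← h1, Finset.mul_sum]
      refine Finset.sum_congr rfl fun i _ => ?_
      ring
    intro i
    simp [h0]
  set G := gramSchmidt ℝ v with hG
  have hGpos : ∀ i, 0 < ‖G i‖ := fun i => norm_pos_iff.2 (gramSchmidt_ne_zero i hv)
  let e := gramSchmidtNormed ℝ v
  have he : ∀ i, e i = (‖G i‖)⁻¹ • G i := fun i => by simp [e, gramSchmidtNormed, hG]
  have heo : Orthonormal ℝ e := gramSchmidtNormed_orthonormal hv
  -- orthogonality to spans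
  have horth : ∀ i : Fin N, ∀ x ∈ Submodule.span ℝ (v '' Set.Iio i), inner ℝ (G i) x = 0 := by
    intro i x hx
    induction hx using Submodule.span_induction with
    | mem x hx =>
      obtain ⟨j, hj, rfl⟩ := hx
      exact gramSchmidt_inv_triangular ℝ v hj
    | zero => simp
    | add x y _ _ hx hy => rw [inner_add_right, hx, hy, add_zero]
    | smul c x _ hx => rw [inner_smul_right, hx, mul_zero]
  have hLspan : ∀ i j : Fin N, (j : ℕ) + 1 ≤ i → ∀ x ∈ Submodule.span ℝ (v '' Set.Iio j),
      L x ∈ Submodule.span ℝ (v '' Set.Iio i) := by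
    intro i j hij x hx
    induction hx using Submodule.span_induction with
    | mem x hx =>
      obtain ⟨m, hm, rfl⟩ := hx
      have hm' : (m : ℕ) < j := hm
      rw [hLv ⟨m + 1, by omega⟩ m rfl]
      refine Submodule.subset_span ⟨_, ?_, rfl⟩
      show (m : ℕ) + 1 < i
      omega
    | zero => simp
    | add x y _ _ hx hy => rw [map_add]; exact Submodule.add_mem _ hx hy
    | smul c x _ hx => rw [map_smul]; exact Submodule.smul_mem _ _ hx
  have hdiff : ∀ j, v j - G j ∈ Submodule.span ℝ (v '' Set.Iio j) := by
    intro j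
    rw [← span_gramSchmidt_Iio ℝ v j]
    have h := gramSchmidt_def'' ℝ v j
    have h2 : v j - G j = ∑ i ∈ Finset.Iio j,
      (inner ℝ (G i) (v j) / (‖G i‖ : ℝ) ^ 2) • G i := by
      rw [sub_eq_iff_eq_add']
      exact h
    rw [h2]
    refine Submodule.sum_mem _ fun i hi => Submodule.smul_mem _ _ ?_
    exact Submodule.subset_span ⟨i, by simpa using hi, rfl⟩
  have hGL : ∀ i j : Fin N, (j : ℕ) + 1 ≤ i → inner ℝ (G i) (L (G j)) = inner ℝ (G i) (L (v j)) := by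
    intro i j hij
    have h := horth i _ (hLspan i j hij _ (hdiff j))
    rw [map_sub, inner_sub_right] at h
    linarith
  have hGv : ∀ i, inner ℝ (G i) (v i) = ‖G i‖ ^ 2 := by
    intro i
    have h := horth i _ (hdiff i)
    rw [inner_sub_right, real_inner_self_eq_norm_sq] at h
    linarith
  have hform : ∀ i j : Fin N, ∑ k, e i k * (lam k * e j k) =
      (‖G i‖)⁻¹ * ((‖G j‖)⁻¹ * inner ℝ (G i) (L (G j))) := by
    intro i j
    have h : ∑ k, e i k * (lam k * e j k) = inner ℝ (e i) (L (e j)) := by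
      rw [hinner]; rfl
    rw [h, he, he, map_smul, real_inner_smul_left, inner_smul_right]
  refine ⟨fun i k => e i k, ?_, ?_, ?_, ?_⟩
  · intro i j
    rw [← hinner]
    exact orthonormal_iff_ite.1 heo i j
  · intro i j hij
    rw [hform, hGL i j hij.le, hLv ⟨j + 1, by omega⟩ j rfl,
      gramSchmidt_inv_triangular ℝ v (show (⟨j + 1, by omega⟩ : Fin N) < i from hij)]
    simp
  · intro i j hij
    rw [hform, hGL i j hij.le, hLv i j hij, hGv]
    have := hGpos i
    have := hGpos j
    positivity
  · intro k
    have h0 : G ⟨0, hN⟩ = v ⟨0, hN⟩ := by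
      rw [hG, gramSchmidt_def, Finset.sum_eq_zero, sub_zero]
      intro i hi
      have h1 : i < ⟨0, hN⟩ := Finset.mem_Iio.1 hi
      exact absurd h1 (Nat.not_lt_zero _)
    have h1 : ‖v ⟨0, hN⟩‖ = 1 := by
      rw [EuclideanSpace.norm_eq]
      simp [v, Real.sq_sqrt (hw _).le, hsum]
    show (e ⟨0, hN⟩) k = _
    rw [he, h0, h1]
    simp [v]

/-- Row orthonormality from column orthogonality. -/
theorem jacobi_rows {N : ℕ} (A : Matrix (Fin N) (Fin N) ℝ) (hA : IsJacobi A)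
    (lam ρ : Fin N → ℝ) (hlam : StrictMono lam) (hρpos : ∀ k, 0 < ρ k)
    (φ : Fin N → Fin N → ℝ) (hφ : ∀ k, A.mulVec (φ k) = lam k • φ k)
    (hn : ∀ k, ∑ i, φ k i * φ k i = ρ k) :
    (∀ i j, ∑ k, 1 / ρ k * (φ k i * φ k j) = if i = j then 1 else 0) ∧
    (∀ i j, A i j = ∑ k, 1 / ρ k * (lam k * (φ k i * φ k j))) := by
  have hsymm : Aᵀ = A := by ext i j; exact hA.1 j i
  have hcol : ∀ k l, φ k ⬝ᵥ φ l = if k = l then ρ k else 0 := by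
    intro k l
    split_ifs with h
    · subst h; exact hn k
    · have h1 : φ k ⬝ᵥ A.mulVec (φ l) = A.mulVec (φ k) ⬝ᵥ φ l := by
        rw [Matrix.dotProduct_mulVec, ← Matrix.mulVec_transpose, hsymm]
      rw [hφ, hφ, dotProduct_smul, smul_dotProduct, smul_eq_mul, smul_eq_mul] at h1
      have h2 : (lam l - lam k) * (φ k ⬝ᵥ φ l) = 0 := by linarith
      rcases mul_eq_zero.1 h2 with h3 | h3
      · exact absurd (hlam.injective (by linarith)) h
      · exact h3
  let P : Matrix (Fin N) (Fin N) ℝ := fun k i => φ k i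
  let R : Matrix (Fin N) (Fin N) ℝ := fun i k => φ k i * (1 / ρ k)
  have hPR : P * R = 1 := by
    ext k l
    have h := hcol k l
    rw [dotProduct] at h
    rw [Matrix.mul_apply, Matrix.one_apply]
    simp only [P, R]
    simp_rw [← mul_assoc]
    rw [← Finset.sum_mul, h]
    split_ifs with hkl
    · subst hkl
      have := (hρpos k).ne'
      field_simp
    · simp
  have hRP : R * P = 1 := mul_eq_one_comm.1 hPR
  have hrow : ∀ i j, ∑ k, 1 / ρ k * (φ k i * φ k j) = if i = j then 1 else 0 := by
    intro i j
    have h := congrFun (congrFun hRP i) j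
    rw [Matrix.mul_apply, Matrix.one_apply] at h
    rw [← h]
    refine Finset.sum_congr rfl fun k _ => ?_
    simp only [P, R]; ring
  refine ⟨hrow, fun i j => ?_⟩
  have h1 : ∀ k, lam k * φ k i = ∑ m, A i m * φ k m := by
    intro k
    have h := congrFun (hφ k) i
    simp only [Matrix.mulVec, dotProduct, Pi.smul_apply, smul_eq_mul] at h
    exact h.symm
  have h2 : ∀ k, 1 / ρ k * (lam k * (φ k i * φ k j)) =
      ∑ m, A i m * (1 / ρ k * (φ k m * φ k j)) := by
    intro k
    rw [← mul_assoc (lam k), h1, Finset.sum_mul, Finset.mul_sum]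
    refine Finset.sum_congr rfl fun m _ => ?_
    ring
  simp_rw [h2]
  rw [Finset.sum_comm]
  simp_rw [← Finset.mul_sum, hrow]
  simp

theorem jacobi_exists {N : ℕ} (hN : 0 < N) (lam ρ : Fin N → ℝ)
    (hlam : StrictMono lam) (hρpos : ∀ k, 0 < ρ k) (hρsum : ∑ k, 1 / ρ k = 1) :
    ∃ A : Matrix (Fin N) (Fin N) ℝ, IsJacobi A ∧
      ∃ φ : Fin N → Fin N → ℝ,
        (∀ k, A.mulVec (φ k) = lam k • φ k) ∧
        (∀ k, φ k ⟨0, hN⟩ = 1) ∧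
        (∀ k, ∑ i, φ k i * φ k i = ρ k) := by
  have hw : ∀ k, 0 < 1 / ρ k := fun k => one_div_pos.2 (hρpos k)
  obtain ⟨e, ho, hz, hp, h0⟩ := exists_lanczos hN lam (fun k => 1 / ρ k) hlam hw hρsum
  have hcol : ∀ k l, ∑ i, e i k * e i l = if k = l then 1 else 0 := by
    let Q : Matrix (Fin N) (Fin N) ℝ := fun i k => e i k
    have h1 : Q * Qᵀ = 1 := by
      ext i j
      rw [Matrix.mul_apply, Matrix.one_apply]
      exact ho i j
    have h2 : Qᵀ * Q = 1 := mul_eq_one_comm.1 h1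
    intro k l
    have h := congrFun (congrFun h2 k) l
    rw [Matrix.mul_apply, Matrix.one_apply] at h
    exact h
  let A : Matrix (Fin N) (Fin N) ℝ := fun i j => ∑ k, e i k * (lam k * e j k)
  have hAs : ∀ i j, A i j = A j i := fun i j =>
    Finset.sum_congr rfl fun k _ => by ring
  have hs : ∀ k, 0 < Real.sqrt (1 / ρ k) := fun k => Real.sqrt_pos.2 (hw k)
  have hAe : ∀ i k, ∑ j, A i j * e j k = lam k * e i k := by
    intro i k
    simp only [A, Finset.sum_mul]
    rw [Finset.sum_comm]
    have : ∀ l, ∑ j, e i l * (lam l * e j l) * e j k = e i l * lam l * if l = k then 1 else 0 := by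
      intro l
      rw [← hcol, Finset.mul_sum]
      refine Finset.sum_congr rfl fun j _ => ?_
      ring
    simp_rw [this]
    simp [mul_comm]
  refine ⟨A, ⟨hAs, fun i j hij => ?_, fun i j hij => ?_⟩,
    fun k i => e i k / Real.sqrt (1 / ρ k), fun k => ?_, fun k => ?_, fun k => ?_⟩
  · rw [hAs]; exact hz j i hij
  · rw [hAs]; exact hp j i hij
  · ext i
    simp only [Matrix.mulVec, dotProduct, Pi.smul_apply, smul_eq_mul]
    simp_rw [← mul_div_assoc]
    rw [← Finset.sum_div, hAe]
  · beta_reduce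
    rw [h0]
    exact div_self (hs k).ne'
  · have h1 : ∀ i, e i k / Real.sqrt (1 / ρ k) * (e i k / Real.sqrt (1 / ρ k)) =
        (e i k * e i k) * ρ k := by
      intro i
      rw [div_mul_div_comm, Real.mul_self_sqrt (hw k).le, div_div_eq_mul_div, div_one]
    simp_rw [h1]
    rw [← Finset.sum_mul, hcol]
    simp

theorem jacobi_unique {N : ℕ} (hN : 0 < N) (lam ρ : Fin N → ℝ)
    (hlam : StrictMono lam) (hρpos : ∀ k, 0 < ρ k)
    (A B : Matrix (Fin N) (Fin N) ℝ) (hA : IsJacobi A) (hB : IsJacobi B)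
    (φ ψ : Fin N → Fin N → ℝ)
    (hφ : ∀ k, A.mulVec (φ k) = lam k • φ k) (hφ0 : ∀ k, φ k ⟨0, hN⟩ = 1)
    (hφn : ∀ k, ∑ i, φ k i * φ k i = ρ k)
    (hψ : ∀ k, B.mulVec (ψ k) = lam k • ψ k) (hψ0 : ∀ k, ψ k ⟨0, hN⟩ = 1)
    (hψn : ∀ k, ∑ i, ψ k i * ψ k i = ρ k) : A = B := by
  obtain ⟨rA, fA⟩ := jacobi_rows A hA lam ρ hlam hρpos φ hφ hφn
  obtain ⟨rB, fB⟩ := jacobi_rows B hB lam ρ hlam hρpos ψ hψ hψn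
  have split : ∀ (C : Matrix (Fin N) (Fin N) ℝ) (_ : IsJacobi C) (x : Fin N → ℝ)
      (i : Fin N) (h : (i : ℕ) + 1 < N),
      C.mulVec x i = C i ⟨i + 1, h⟩ * x ⟨i + 1, h⟩ + ∑ j ∈ Finset.Iic i, C i j * x j := by
    intro C hC x i h
    rw [Matrix.mulVec, dotProduct]
    have hnot : (⟨i + 1, h⟩ : Fin N) ∉ Finset.Iic i := by
      simp [Fin.le_def]
    rw [← Finset.sum_insert (f := fun j => C i j * x j) hnot]
    symm
    apply Finset.sum_subset (Finset.subset_univ _)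
    intro j _ hj
    rw [Finset.mem_insert, Finset.mem_Iic, not_or] at hj
    have h1 : (j : ℕ) ≠ i + 1 := fun h' => hj.1 (Fin.ext h')
    have h2 : ¬ (j : ℕ) ≤ i := hj.2
    rw [hC.2.1 i j (by omega), zero_mul]
  have key : ∀ n : ℕ, ∀ i : Fin N, (i : ℕ) ≤ n → ∀ k, φ k i = ψ k i := by
    intro n
    induction n with
    | zero =>
      intro i hi k
      have : i = ⟨0, hN⟩ := Fin.ext (by simpa using hi)
      rw [this, hφ0, hψ0]
    | succ n ih =>
      intro i hi k
      rcases Nat.lt_or_ge (i : ℕ) (n + 1) with h | h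
      · exact ih i (by omega) k
      have hin : (i : ℕ) = n + 1 := by omega
      have hnN : n + 1 < N := by have := i.2; omega
      let p : Fin N := ⟨n, by omega⟩
      have hpi : (⟨(p : ℕ) + 1, hnN⟩ : Fin N) = i := Fin.ext hin.symm
      have hAB : ∀ j ∈ Finset.Iic p, A p j = B p j := by
        intro j hj
        have hj1 : j ≤ p := Finset.mem_Iic.1 hj
        have hj' : (j : ℕ) ≤ n := hj1
        rw [fA, fB]
        refine Finset.sum_congr rfl fun l _ => ?_
        rw [ih p le_rfl, ih j hj']
      have heq : ∀ l, A p i * φ l i = B p i * ψ l i := by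
        intro l
        have h1 := split A hA (φ l) p hnN
        have h2 := split B hB (ψ l) p hnN
        rw [hφ, hpi, Pi.smul_apply, smul_eq_mul] at h1
        rw [hψ, hpi, Pi.smul_apply, smul_eq_mul] at h2
        have h3 : ∑ j ∈ Finset.Iic p, A p j * φ l j = ∑ j ∈ Finset.Iic p, B p j * ψ l j := by
          refine Finset.sum_congr rfl fun j hj => ?_
          have hj1 : j ≤ p := Finset.mem_Iic.1 hj
          rw [hAB j hj, ih j hj1]
        rw [ih p le_rfl] at h1
        linarith
      have hApos : 0 < A p i := hA.2.2 p i hin.symm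
      have hBpos : 0 < B p i := hB.2.2 p i hin.symm
      have hsq : A p i ^ 2 = B p i ^ 2 := by
        have h1 := rA i i
        have h2 := rB i i
        rw [if_pos rfl] at h1 h2
        calc A p i ^ 2 = A p i ^ 2 * ∑ l, 1 / ρ l * (φ l i * φ l i) := by rw [h1, mul_one]
          _ = B p i ^ 2 * ∑ l, 1 / ρ l * (ψ l i * ψ l i) := by
            rw [Finset.mul_sum, Finset.mul_sum]
            refine Finset.sum_congr rfl fun l _ => ?_
            calc A p i ^ 2 * (1 / ρ l * (φ l i * φ l i))
                = 1 / ρ l * ((A p i * φ l i) * (A p i * φ l i)) := by ring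
              _ = 1 / ρ l * ((B p i * ψ l i) * (B p i * ψ l i)) := by rw [heq]
              _ = _ := by ring
          _ = B p i ^ 2 := by rw [h2, mul_one]
      have hEq : A p i = B p i := by
        rcases sq_eq_sq_iff_eq_or_eq_neg.1 hsq with h | h
        · exact h
        · linarith
      have h1 := heq k
      rw [hEq] at h1
      exact mul_left_cancel₀ hBpos.ne' h1
  ext i j
  rw [fA, fB]
  refine Finset.sum_congr rfl fun l _ => ?_
  rw [key i i le_rfl, key j j le_rfl]

/-- existence and uniqueness of a Jacobi matrix with prescribed
spectral data `(λ_k, ρ_k)` (with `λ₁ < … < λ_N`, `ρ_k > 0`, `∑ 1/ρ_k = 1`);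
consequently a function `r` is a response function of the system associated with
some Jacobi matrix iff it has the form `r(t) = ∑ (1/ρ_k) S(t, λ_k)` for such data. -/
theorem stmt11 {N : ℕ} (hN : 0 < N) (lam ρ : Fin N → ℝ)
    (hlam : StrictMono lam) (hρpos : ∀ k, 0 < ρ k) (hρsum : ∑ k, 1 / ρ k = 1) :
    (∃! A : Matrix (Fin N) (Fin N) ℝ, IsJacobi A ∧
      ∃ φ : Fin N → Fin N → ℝ,
        (∀ k, A.mulVec (φ k) = lam k • φ k) ∧
        (∀ k, φ k ⟨0, hN⟩ = 1) ∧
        (∀ k, ∑ i, φ k i * φ k i = ρ k)) ∧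
    (∀ r : ℝ → ℝ,
      (∃ (M : ℕ) (hM : 0 < M) (A : Matrix (Fin M) (Fin M) ℝ), IsJacobi A ∧
        ∃ (lam' : Fin M → ℝ) (φ : Fin M → Fin M → ℝ),
          StrictMono lam' ∧
          (∀ k, A.mulVec (φ k) = lam' k • φ k) ∧
          (∀ k, φ k ⟨0, hM⟩ = 1) ∧
          r = fun t => ∑ k, (1 / ∑ i, φ k i * φ k i) * S t (lam' k)) ↔
      (∃ (M : ℕ) (_ : 0 < M) (lam' ρ' : Fin M → ℝ),
        StrictMono lam' ∧ (∀ k, 0 < ρ' k) ∧ (∑ k, 1 / ρ' k = 1) ∧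
        r = fun t => ∑ k, (1 / ρ' k) * S t (lam' k))) := by
  refine ⟨?_, fun r => ⟨?_, ?_⟩⟩
  · obtain ⟨A, hA, φ, h1, h2, h3⟩ := jacobi_exists hN lam ρ hlam hρpos hρsum
    refine ⟨A, ⟨hA, φ, h1, h2, h3⟩, ?_⟩
    rintro B ⟨hB, ψ, g1, g2, g3⟩
    exact jacobi_unique hN lam ρ hlam hρpos B A hB hA ψ φ g1 g2 g3 h1 h2 h3
  · rintro ⟨M, hM, A, hA, lam', φ, hmono, h1, h2, rfl⟩
    have hpos : ∀ k, 0 < ∑ i, φ k i * φ k i := by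
      intro k
      refine Finset.sum_pos' (fun i _ => mul_self_nonneg _) ⟨⟨0, hM⟩, Finset.mem_univ _, ?_⟩
      rw [h2]; norm_num
    refine ⟨M, hM, lam', fun k => ∑ i, φ k i * φ k i, hmono, hpos, ?_, rfl⟩
    have h := (jacobi_rows A hA lam' (fun k => ∑ i, φ k i * φ k i) hmono hpos φ h1
      (fun _ => rfl)).1 ⟨0, hM⟩ ⟨0, hM⟩
    simpa [h2] using h
  · rintro ⟨M, hM, lam', ρ', hmono, hpos, hsum, rfl⟩
    obtain ⟨A, hA, φ, h1, h2, h3⟩ := jacobi_exists hM lam' ρ' hmono hpos hsum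
    refine ⟨M, hM, A, hA, lam', φ, hmono, h1, h2, ?_⟩
    simp_rw [h3]
end

section
/- Let A and à be N×N Jacobi matrices with response functions r and r̃ respectively. If there exists ε > 0 such that r(t) = r̃(t) for all t ∈ (0, ε), then A = Ã. -/
open MeasureTheory Real Matrix

/-- derivative of `S` in time -/
noncomputable def Cfun (t lam : ℝ) : ℝ :=
  if 0 < lam then Real.cos (Real.sqrt lam * t)
  else if lam < 0 then Real.cosh (Real.sqrt (-lam) * t)
  else 1

lemma hasDerivAt_S (t lam : ℝ) : HasDerivAt (fun t => S t lam) (Cfun t lam) t := by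
  unfold S Cfun
  rcases lt_trichotomy lam 0 with h | h | h
  · have h' : ¬ 0 < lam := by linarith
    simp only [h, h', if_true, if_false]
    have hs : Real.sqrt (-lam) ≠ 0 := (Real.sqrt_pos.2 (by linarith)).ne'
    have h1 : HasDerivAt (fun t : ℝ => Real.sqrt (-lam) * t) (Real.sqrt (-lam)) t := by
      simpa using (hasDerivAt_id t).const_mul (Real.sqrt (-lam))
    have := (h1.sinh).div_const (Real.sqrt (-lam))
    rwa [mul_div_cancel_right₀ _ hs] at this
  · subst h
    simpa using hasDerivAt_id' t
  · simp only [h, if_true]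
    have hs : Real.sqrt lam ≠ 0 := (Real.sqrt_pos.2 h).ne'
    have h1 : HasDerivAt (fun t : ℝ => Real.sqrt lam * t) (Real.sqrt lam) t := by
      simpa using (hasDerivAt_id t).const_mul (Real.sqrt lam)
    have := (h1.sin).div_const (Real.sqrt lam)
    rwa [mul_div_cancel_right₀ _ hs] at this

lemma hasDerivAt_Cfun (t lam : ℝ) :
    HasDerivAt (fun t => Cfun t lam) (-lam * S t lam) t := by
  unfold S Cfun
  rcases lt_trichotomy lam 0 with h | h | h
  · have h' : ¬ 0 < lam := by linarith
    simp only [h, h', if_true, if_false]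
    have hs : Real.sqrt (-lam) ≠ 0 := (Real.sqrt_pos.2 (by linarith)).ne'
    have hq : Real.sqrt (-lam) * Real.sqrt (-lam) = -lam := Real.mul_self_sqrt (by linarith)
    have h1 : HasDerivAt (fun t : ℝ => Real.sqrt (-lam) * t) (Real.sqrt (-lam)) t := by
      simpa using (hasDerivAt_id t).const_mul (Real.sqrt (-lam))
    convert h1.cosh using 1
    nth_rewrite 1 [← hq]
    field_simp
  · subst h
    simpa using hasDerivAt_const t (1 : ℝ)
  · simp only [h, if_true]
    have hs : Real.sqrt lam ≠ 0 := (Real.sqrt_pos.2 h).ne'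
    have hq : Real.sqrt lam * Real.sqrt lam = lam := Real.mul_self_sqrt h.le
    have h1 : HasDerivAt (fun t : ℝ => Real.sqrt lam * t) (Real.sqrt lam) t := by
      simpa using (hasDerivAt_id t).const_mul (Real.sqrt lam)
    convert h1.cos using 1
    nth_rewrite 1 [← hq]
    field_simp

lemma Cfun_zero (lam : ℝ) : Cfun 0 lam = 1 := by
  unfold Cfun
  split_ifs <;> simp

lemma deriv_zero_of_Ioo {f : ℝ → ℝ} {f' t ε : ℝ} (hf : HasDerivAt f f' t)
    (ht : t ∈ Set.Ioo (0:ℝ) ε) (h : ∀ t ∈ Set.Ioo (0:ℝ) ε, f t = 0) : f' = 0 := by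
  have h2 : HasDerivAt f 0 t := by
    refine (hasDerivAt_const t (0:ℝ)).congr_of_eventuallyEq ?_
    filter_upwards [Ioo_mem_nhds ht.1 ht.2] with x hx using h x hx
  exact hf.unique h2

lemma moment_step {ι : Type} [Fintype ι] (c lam : ι → ℝ) (ε : ℝ) (hε : 0 < ε)
    (h : ∀ t ∈ Set.Ioo (0:ℝ) ε, ∑ k, c k * S t (lam k) = 0) :
    ∑ k, c k = 0 ∧ ∀ t ∈ Set.Ioo (0:ℝ) ε, ∑ k, (c k * lam k) * S t (lam k) = 0 := by
  have hC : ∀ t ∈ Set.Ioo (0:ℝ) ε, ∑ k, c k * Cfun t (lam k) = 0 := fun t ht =>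
    deriv_zero_of_Ioo (HasDerivAt.fun_sum fun k _ => (hasDerivAt_S t (lam k)).const_mul (c k)) ht h
  have hdC : ∀ t, HasDerivAt (fun t => ∑ k, c k * Cfun t (lam k))
      (∑ k, c k * (-lam k * S t (lam k))) t := fun t =>
    HasDerivAt.fun_sum fun k _ => (hasDerivAt_Cfun t (lam k)).const_mul (c k)
  constructor
  · have h1 := ((hdC 0).continuousAt.tendsto).mono_left (nhdsWithin_le_nhds (s := Set.Ioi 0))
    have h2 : Filter.Tendsto (fun t => ∑ k, c k * Cfun t (lam k)) (nhdsWithin 0 (Set.Ioi 0))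
        (nhds 0) := by
      refine (tendsto_const_nhds (x := (0:ℝ))).congr' ?_
      filter_upwards [Ioo_mem_nhdsGT hε] with x hx using (hC x hx).symm
    have := tendsto_nhds_unique h1 h2
    simpa [Cfun_zero] using this
  · intro t ht
    have := deriv_zero_of_Ioo (hdC t) ht hC
    rw [← neg_eq_zero, ← this, ← Finset.sum_neg_distrib]
    exact Finset.sum_congr rfl fun k _ => by ring

lemma moments_zero {ι : Type} [Fintype ι] (lam : ι → ℝ) (ε : ℝ) (hε : 0 < ε) (n : ℕ) :
    ∀ c : ι → ℝ, (∀ t ∈ Set.Ioo (0:ℝ) ε, ∑ k, c k * S t (lam k) = 0) →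
    ∑ k, c k * lam k ^ n = 0 := by
  induction n with
  | zero => intro c h; simpa using (moment_step c lam ε hε h).1
  | succ n ih =>
    intro c h
    rw [← ih _ (moment_step c lam ε hε h).2]
    exact Finset.sum_congr rfl fun k _ => by ring

lemma jacobi_moments {N : ℕ} (hN : 0 < N) (A : Matrix (Fin N) (Fin N) ℝ)
    (hA : IsJacobi A) (lam : Fin N → ℝ) (φ : Fin N → Fin N → ℝ) (ρ : Fin N → ℝ)
    (hlam : StrictMono lam) (heig : ∀ k, A.mulVec (φ k) = lam k • φ k)
    (hφ1 : ∀ k, φ k ⟨0, hN⟩ = 1) (hρ : ∀ k, ρ k = ∑ i, φ k i * φ k i) (n : ℕ) :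
    (A ^ n) ⟨0, hN⟩ ⟨0, hN⟩ = ∑ k, (1 / ρ k) * lam k ^ n := by
  have hAT : Aᵀ = A := by ext i j; exact hA.1 j i
  have hρ0 : ∀ k, ρ k ≠ 0 := by
    intro k
    have : 0 < ρ k := by
      rw [hρ]
      exact Finset.sum_pos' (fun i _ => mul_self_nonneg _)
        ⟨⟨0, hN⟩, Finset.mem_univ _, by simp [hφ1]⟩
    exact this.ne'
  have horth : ∀ k l, k ≠ l → φ k ⬝ᵥ φ l = 0 := by
    intro k l hkl
    have h1 : φ k ⬝ᵥ A.mulVec (φ l) = lam l * (φ k ⬝ᵥ φ l) := by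
      rw [heig, dotProduct_smul, smul_eq_mul]
    have h2 : φ k ⬝ᵥ A.mulVec (φ l) = lam k * (φ k ⬝ᵥ φ l) := by
      rw [dotProduct_mulVec, ← mulVec_transpose, hAT, heig, smul_dotProduct, smul_eq_mul]
    have h3 : (lam k - lam l) * (φ k ⬝ᵥ φ l) = 0 := by rw [sub_mul, ← h1, ← h2, sub_self]
    rcases mul_eq_zero.1 h3 with h | h
    · exact absurd (hlam.injective (sub_eq_zero.1 h)) hkl
    · exact h
  let Φ : Matrix (Fin N) (Fin N) ℝ := Matrix.of φ
  have h1 : Φ * (Φᵀ * Matrix.diagonal (fun k => 1 / ρ k)) = 1 := by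
    rw [← Matrix.mul_assoc]
    ext k l
    rw [Matrix.mul_diagonal, Matrix.mul_apply]
    by_cases hkl : k = l
    · subst hkl
      simp only [Φ, Matrix.transpose_apply, Matrix.of_apply, ← hρ, Matrix.one_apply_eq]
      field_simp [hρ0 k]
    · have := horth k l hkl
      simp only [dotProduct] at this
      simp [Φ, hkl, this]
  have h2 := mul_eq_one_comm.1 h1
  have hpow : ∀ k, (A ^ n).mulVec (φ k) = lam k ^ n • φ k := by
    intro k
    induction n with
    | zero => simp
    | succ n ih => rw [pow_succ, ← mulVec_mulVec, heig, mulVec_smul, ih, smul_smul, pow_succ']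
  have h3 : A ^ n = (A ^ n * Φᵀ) * (Matrix.diagonal (fun k => 1 / ρ k) * Φ) := by
    rw [Matrix.mul_assoc, ← Matrix.mul_assoc Φᵀ, h2, Matrix.mul_one]
  rw [h3, Matrix.mul_apply]
  refine Finset.sum_congr rfl fun k _ => ?_
  have h4 : (A ^ n * Φᵀ) ⟨0, hN⟩ k = lam k ^ n := by
    have := congrFun (hpow k) ⟨0, hN⟩
    simp only [Pi.smul_apply, hφ1, smul_eq_mul, mul_one] at this
    rw [← this]
    rfl
  rw [h4, Matrix.diagonal_mul]
  simp [Φ, hφ1, mul_comm]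

lemma krylov {N : ℕ} (hN : 0 < N) (A : Matrix (Fin N) (Fin N) ℝ) (hA : IsJacobi A) (n : ℕ) :
    (∀ i : Fin N, n < (i : ℕ) → (A ^ n) i ⟨0, hN⟩ = 0) ∧
    (∀ i : Fin N, n = (i : ℕ) → 0 < (A ^ n) i ⟨0, hN⟩) := by
  induction n with
  | zero =>
    constructor
    · intro i hi
      rw [pow_zero, Matrix.one_apply_ne]
      intro h; rw [h] at hi; simp at hi
    · intro i hi
      have : i = ⟨0, hN⟩ := Fin.ext hi.symm
      simp [this]
  | succ n ih =>
    constructor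
    · intro i hi
      rw [pow_succ', Matrix.mul_apply]
      refine Finset.sum_eq_zero fun k _ => ?_
      by_cases hk : n < (k : ℕ)
      · rw [ih.1 k hk, mul_zero]
      · rw [hA.1, hA.2.1 k i (by omega), zero_mul]
    · intro i hi
      rw [pow_succ', Matrix.mul_apply, Finset.sum_eq_single (⟨n, by omega⟩ : Fin N)]
      · refine mul_pos ?_ (ih.2 _ rfl)
        rw [hA.1]
        exact hA.2.2 _ _ hi
      · intro k _ hk
        have hk' : (k : ℕ) ≠ n := fun h => hk (Fin.ext h)
        by_cases hk2 : n < (k : ℕ)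
        · rw [ih.1 k hk2, mul_zero]
        · rw [hA.1, hA.2.1 k i (by omega), zero_mul]
      · simp

lemma cholesky_unique {N : ℕ} (V W : Matrix (Fin N) (Fin N) ℝ)
    (hV : ∀ i j, j < i → V i j = 0) (hW : ∀ i j, j < i → W i j = 0)
    (hV0 : ∀ i, 0 < V i i) (hW0 : ∀ i, 0 < W i i)
    (h : Vᵀ * V = Wᵀ * W) : V = W := by
  have key : ∀ n : ℕ, ∀ i : Fin N, (i : ℕ) = n → ∀ j, V i j = W i j := by
    intro n
    induction n using Nat.strong_induction_on with
    | _ n ih =>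
    intro i hi
    have hm : ∀ j, V i i * V i j = W i i * W i j := by
      intro j
      have h1 := congrFun (congrFun h i) j
      simp only [Matrix.mul_apply, Matrix.transpose_apply] at h1
      rw [← Finset.add_sum_erase _ _ (Finset.mem_univ i),
        ← Finset.add_sum_erase (a := i) _ (fun k => W k i * W k j) (Finset.mem_univ i)] at h1
      have h2 : ∑ k ∈ Finset.univ.erase i, V k i * V k j
          = ∑ k ∈ Finset.univ.erase i, W k i * W k j := by
        refine Finset.sum_congr rfl fun k hk => ?_
        rcases lt_or_gt_of_ne (Finset.ne_of_mem_erase hk) with hlt | hgt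
        · have := ih k (by rw [← hi]; exact hlt) k rfl
          rw [this, this]
        · rw [hV k i hgt, hW k i hgt, zero_mul, zero_mul]
      linarith
    have hd : V i i = W i i :=
      (mul_self_inj (hV0 i).le (hW0 i).le).1 (hm i)
    intro j
    have := hm j
    rw [hd] at this
    exact mul_left_cancel₀ (hW0 i).ne' this
  ext i j
  exact key i i rfl j

lemma jacobi_unique_s12 {N : ℕ} (hN : 0 < N) (A B : Matrix (Fin N) (Fin N) ℝ)
    (hA : IsJacobi A) (hB : IsJacobi B)
    (h : ∀ n : ℕ, (A ^ n) ⟨0, hN⟩ ⟨0, hN⟩ = (B ^ n) ⟨0, hN⟩ ⟨0, hN⟩) : A = B := by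
  let K : Matrix (Fin N) (Fin N) ℝ → Matrix (Fin N) (Fin N) ℝ :=
    fun A => Matrix.of fun i j => (A ^ (j : ℕ)) i ⟨0, hN⟩
  have hpT : ∀ A : Matrix (Fin N) (Fin N) ℝ, IsJacobi A → ∀ n i j, (A ^ n) i j = (A ^ n) j i := by
    intro A hA n i j
    have hAT : Aᵀ = A := by ext i j; exact hA.1 j i
    have : (A ^ n)ᵀ = A ^ n := by rw [Matrix.transpose_pow, hAT]
    exact congrFun (congrFun this j) i
  have hG : ∀ A : Matrix (Fin N) (Fin N) ℝ, IsJacobi A → ∀ i j,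
      ((K A)ᵀ * K A) i j = (A ^ ((i : ℕ) + j)) ⟨0, hN⟩ ⟨0, hN⟩ := by
    intro A hA i j
    rw [pow_add, Matrix.mul_apply, Matrix.mul_apply]
    refine Finset.sum_congr rfl fun k _ => ?_
    simp only [K, Matrix.transpose_apply, Matrix.of_apply]
    rw [hpT A hA _ k]
  have hH : ∀ A : Matrix (Fin N) (Fin N) ℝ, IsJacobi A → ∀ i j,
      ((K A)ᵀ * (A * K A)) i j = (A ^ ((i : ℕ) + (j + 1))) ⟨0, hN⟩ ⟨0, hN⟩ := by
    intro A hA i j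
    rw [pow_add, Matrix.mul_apply, Matrix.mul_apply]
    refine Finset.sum_congr rfl fun k _ => ?_
    rw [pow_succ', Matrix.mul_apply, Matrix.mul_apply]
    simp only [K, Matrix.transpose_apply, Matrix.of_apply]
    rw [hpT A hA _ k]
  have hup : ∀ A : Matrix (Fin N) (Fin N) ℝ, IsJacobi A → ∀ i j, j < i → K A i j = 0 :=
    fun A hA i j hij => (krylov hN A hA j).1 i hij
  have hpos : ∀ A : Matrix (Fin N) (Fin N) ℝ, IsJacobi A → ∀ i, 0 < K A i i :=
    fun A hA i => (krylov hN A hA i).2 i rfl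
  have hK : K A = K B := by
    refine cholesky_unique _ _ (hup A hA) (hup B hB) (hpos A hA) (hpos B hB) ?_
    ext i j
    rw [hG A hA, hG B hB, h]
  have hdet : IsUnit (K A).det := by
    have : (K A).BlockTriangular id := fun i j hij => hup A hA i j hij
    rw [Matrix.det_of_isUpperTriangular this, isUnit_iff_ne_zero]
    exact (Finset.prod_pos fun i _ => hpos A hA i).ne'
  have hE : (K A)ᵀ * (A * K A) = (K A)ᵀ * (B * K A) := by
    have : (K A)ᵀ * (A * K A) = (K B)ᵀ * (B * K B) := by
      ext i j
      rw [hH A hA, hH B hB, h]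
    rw [this, hK]
  have hu : IsUnit (K A) := (Matrix.isUnit_iff_isUnit_det _).2 hdet
  have huT : IsUnit (K A)ᵀ := (Matrix.isUnit_iff_isUnit_det _).2 (by rwa [Matrix.det_transpose])
  exact hu.mul_right_cancel (huT.mul_left_cancel hE)

/-- if the response functions of two `N×N` Jacobi matrices coincide on
some interval `(0, ε)`, then the matrices coincide. -/
theorem stmt12 {N : ℕ} (hN : 0 < N) (A B : Matrix (Fin N) (Fin N) ℝ)
    (hA : IsJacobi A) (hB : IsJacobi B)
    (lamA lamB : Fin N → ℝ) (φA φB : Fin N → Fin N → ℝ) (ρA ρB : Fin N → ℝ)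
    (hlamA : StrictMono lamA) (hlamB : StrictMono lamB)
    (heigA : ∀ k, A.mulVec (φA k) = lamA k • φA k)
    (heigB : ∀ k, B.mulVec (φB k) = lamB k • φB k)
    (hφA1 : ∀ k, φA k ⟨0, hN⟩ = 1) (hφB1 : ∀ k, φB k ⟨0, hN⟩ = 1)
    (hρA : ∀ k, ρA k = ∑ i, φA k i * φA k i) (hρB : ∀ k, ρB k = ∑ i, φB k i * φB k i)
    (rA rB : ℝ → ℝ)
    (hrA : rA = fun t => ∑ k, (1 / ρA k) * S t (lamA k))
    (hrB : rB = fun t => ∑ k, (1 / ρB k) * S t (lamB k))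
    (ε : ℝ) (hε : 0 < ε) (hr : ∀ t ∈ Set.Ioo (0:ℝ) ε, rA t = rB t) :
    A = B := by
  refine jacobi_unique_s12 hN A B hA hB fun n => ?_
  rw [jacobi_moments hN A hA lamA φA ρA hlamA heigA hφA1 hρA,
    jacobi_moments hN B hB lamB φB ρB hlamB heigB hφB1 hρB]
  have := moments_zero (ι := Fin N ⊕ Fin N) (Sum.elim lamA lamB) ε hε n
    (Sum.elim (fun k => 1 / ρA k) (fun k => -(1 / ρB k))) (by
      intro t ht
      have := hr t ht
      rw [hrA, hrB] at this
      simp only [Fintype.sum_sum_type, Sum.elim_inl, Sum.elim_inr, neg_mul,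
        Finset.sum_neg_distrib]
      exact add_neg_eq_zero.2 this)
  simp only [Fintype.sum_sum_type, Sum.elim_inl, Sum.elim_inr, neg_mul,
    Finset.sum_neg_distrib] at this
  exact add_neg_eq_zero.1 this
end

section
/- Let A be an N×N Jacobi matrix with spectral data (λ_k, φ_k, ρ_k) as in the context, T > 0, and let F_0^T = { f ∈ C^∞([0,T]) : f(0) = f(T) = f'(0) = f'(T) = 0 }. Then inf { ⟨C^T f'', f⟩_{L²(0,T)} : f ∈ F_0^T, ⟨C^T f, f⟩_{L²(0,T)} = 1 } = −λ_N, where λ_N is the largest eigenvalue of A (i.e. the infimum equals the smallest eigenvalue of −A, the operator governing the system u'' = −Au + F). -/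
open MeasureTheory Real Matrix

/-- The connecting operator `C^T`. -/
noncomputable def CTop {N : ℕ} (lam ρ : Fin N → ℝ) (T : ℝ) (f : ℝ → ℝ) : ℝ → ℝ :=
  fun t => ∑ k, (1 / ρ k) * S (T - t) (lam k) * ∫ s in (0:ℝ)..T, S (T - s) (lam k) * f s

/-- derivative of `S` in time. -/
noncomputable def Sd (t lam : ℝ) : ℝ :=
  if 0 < lam then Real.cos (Real.sqrt lam * t)
  else if lam < 0 then Real.cosh (Real.sqrt (-lam) * t)
  else 1

lemma S_hasDeriv (t l : ℝ) : HasDerivAt (fun t => S t l) (Sd t l) t := by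
  unfold S Sd
  split_ifs with h1 h2
  · have hs : Real.sqrt l ≠ 0 := (Real.sqrt_pos.2 h1).ne'
    have := (((hasDerivAt_id t).const_mul (Real.sqrt l)).sin).div_const (Real.sqrt l)
    refine this.congr_deriv ?_
    simp; field_simp
  · have hs : Real.sqrt (-l) ≠ 0 := (Real.sqrt_pos.2 (by linarith)).ne'
    have := (((hasDerivAt_id t).const_mul (Real.sqrt (-l))).sinh).div_const (Real.sqrt (-l))
    refine this.congr_deriv ?_
    simp; field_simp
  · exact hasDerivAt_id t

lemma Sd_hasDeriv (t l : ℝ) : HasDerivAt (fun t => Sd t l) (-l * S t l) t := by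
  unfold S Sd
  split_ifs with h1 h2
  · have hs : Real.sqrt l ≠ 0 := (Real.sqrt_pos.2 h1).ne'
    have := (((hasDerivAt_id t).const_mul (Real.sqrt l)).cos)
    refine this.congr_deriv ?_
    have h3 := Real.sq_sqrt h1.le
    simp
    field_simp
    rw [h3]; ring
  · have hs : Real.sqrt (-l) ≠ 0 := (Real.sqrt_pos.2 (by linarith)).ne'
    have := (((hasDerivAt_id t).const_mul (Real.sqrt (-l))).cosh)
    refine this.congr_deriv ?_
    have h3 := Real.sq_sqrt (show 0 ≤ -l by linarith)
    simp
    field_simp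
    rw [h3]; ring
  · have : l = 0 := by linarith
    subst this
    simpa using hasDerivAt_const t (1:ℝ)

lemma S_contDiff (l : ℝ) : ContDiff ℝ (⊤ : ℕ∞) (fun t => S t l) := by
  unfold S
  split_ifs with h1 h2
  · exact (Real.contDiff_sin.comp (contDiff_const.mul contDiff_id)).div_const _
  · exact (Real.contDiff_sinh.comp (contDiff_const.mul contDiff_id)).div_const _
  · exact contDiff_id

lemma S_Sd_id (t l : ℝ) : Sd t l ^ 2 + l * S t l ^ 2 = 1 := by
  unfold S Sd
  split_ifs with h1 h2
  · have hs : Real.sqrt l ≠ 0 := (Real.sqrt_pos.2 h1).ne'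
    have h3 := Real.sq_sqrt h1.le
    rw [div_pow, h3, mul_div_cancel₀ _ h1.ne']
    exact Real.cos_sq_add_sin_sq _
  · have h3 := Real.sq_sqrt (show 0 ≤ -l by linarith)
    rw [div_pow, h3, div_neg, mul_neg, mul_div_cancel₀ _ h2.ne]
    linarith [Real.cosh_sq (Real.sqrt (-l) * t)]
  · have : l = 0 := by linarith
    subst this; simp

lemma STcont (T l : ℝ) : Continuous (fun t => S (T - t) l) :=
  (S_contDiff l).continuous.comp (continuous_const.sub continuous_id)

lemma SdTcont (T l : ℝ) : Continuous (fun t => Sd (T - t) l) :=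
  (continuous_iff_continuousAt.2 fun t => (Sd_hasDeriv t l).continuousAt).comp
    (continuous_const.sub continuous_id)

lemma ST_hasDeriv (T t l : ℝ) : HasDerivAt (fun t => S (T - t) l) (-Sd (T - t) l) t := by
  have := (S_hasDeriv (T - t) l).comp t ((hasDerivAt_id t).const_sub T)
  simpa [Function.comp_def] using this

lemma SdT_hasDeriv (T t l : ℝ) : HasDerivAt (fun t => Sd (T - t) l) (l * S (T - t) l) t := by
  have := (Sd_hasDeriv (T - t) l).comp t ((hasDerivAt_id t).const_sub T)
  simpa [Function.comp_def] using this

/-- Fourier-type coefficient. -/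
noncomputable def cf (T l : ℝ) (f : ℝ → ℝ) : ℝ := ∫ s in (0:ℝ)..T, S (T - s) l * f s

lemma inner_CT {N : ℕ} (lam ρ : Fin N → ℝ) (T : ℝ) (hT : 0 < T) (f g : ℝ → ℝ)
    (hg : ContinuousOn g (Set.Icc 0 T)) :
    (∫ t in (0:ℝ)..T, CTop lam ρ T f t * g t) =
      ∑ k, (1 / ρ k) * cf T (lam k) f * cf T (lam k) g := by
  have h : ∀ t, CTop lam ρ T f t * g t =
      ∑ k, ((1 / ρ k) * cf T (lam k) f) * (S (T - t) (lam k) * g t) := by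
    intro t
    unfold CTop cf
    rw [Finset.sum_mul]
    refine Finset.sum_congr rfl fun k _ => by ring
  simp_rw [h]
  rw [intervalIntegral.integral_finsetSum]
  · refine Finset.sum_congr rfl fun k _ => ?_
    rw [intervalIntegral.integral_const_mul]
    rfl
  · intro k _
    apply ContinuousOn.intervalIntegrable
    rw [Set.uIcc_of_le hT.le]
    exact continuousOn_const.mul ((STcont T (lam k)).continuousOn.mul hg)

lemma cf_deriv2 (T l : ℝ) (hT : 0 < T) (f : ℝ → ℝ)
    (hf : ContDiffOn ℝ (⊤ : ℕ∞) f (Set.Icc 0 T)) (h0 : f 0 = 0) (h1 : f T = 0)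
    (h2 : derivWithin f (Set.Icc 0 T) 0 = 0) (h3 : derivWithin f (Set.Icc 0 T) T = 0) :
    cf T l (deriv (deriv f)) = - l * cf T l f := by
  have hU : UniqueDiffOn ℝ (Set.Icc 0 T) := uniqueDiffOn_Icc hT
  set g := derivWithin f (Set.Icc 0 T) with hgdef
  have hg : ContDiffOn ℝ (⊤ : ℕ∞) g (Set.Icc 0 T) := hf.derivWithin hU (by simp)
  set h := derivWithin g (Set.Icc 0 T) with hhdef
  have hh : ContDiffOn ℝ (⊤ : ℕ∞) h (Set.Icc 0 T) := hg.derivWithin hU (by simp)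
  have hfd : ∀ t ∈ Set.Ioo 0 T, HasDerivAt f (g t) t := fun t ht =>
    ((hf.differentiableOn (by simp)) t (Set.Ioo_subset_Icc_self ht)).hasDerivWithinAt.hasDerivAt
      (Icc_mem_nhds ht.1 ht.2)
  have hgd : ∀ t ∈ Set.Ioo 0 T, HasDerivAt g (h t) t := fun t ht =>
    ((hg.differentiableOn (by simp)) t (Set.Ioo_subset_Icc_self ht)).hasDerivWithinAt.hasDerivAt
      (Icc_mem_nhds ht.1 ht.2)
  have hdd : ∀ t ∈ Set.Ioo 0 T, deriv (deriv f) t = h t := by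
    intro t ht
    have : deriv f =ᶠ[nhds t] g := by
      filter_upwards [Ioo_mem_nhds ht.1 ht.2] with s hs using (hfd s hs).deriv
    rw [this.deriv_eq]
    exact (hgd t ht).deriv
  have e1 : cf T l (deriv (deriv f)) = cf T l h := by
    unfold cf
    rw [intervalIntegral.integral_of_le hT.le, intervalIntegral.integral_of_le hT.le,
      integral_Ioc_eq_integral_Ioo, integral_Ioc_eq_integral_Ioo]
    refine setIntegral_congr_fun measurableSet_Ioo fun t ht => ?_
    simp only [hdd t ht]
  have i1 : IntervalIntegrable (fun t => S (T - t) l * h t) volume 0 T := by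
    apply ContinuousOn.intervalIntegrable
    rw [Set.uIcc_of_le hT.le]
    exact (STcont T l).continuousOn.mul hh.continuousOn
  have i2 : IntervalIntegrable (fun t => S (T - t) l * f t) volume 0 T := by
    apply ContinuousOn.intervalIntegrable
    rw [Set.uIcc_of_le hT.le]
    exact (STcont T l).continuousOn.mul hf.continuousOn
  have key : ∫ t in (0:ℝ)..T, (S (T - t) l * h t + l * (S (T - t) l * f t)) = 0 := by
    rw [intervalIntegral.integral_eq_sub_of_hasDerivAt_of_le hT.le
      (f := fun t => S (T - t) l * g t + Sd (T - t) l * f t) ?_ ?_ (i1.add (i2.const_mul l))]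
    · simp [h0, h1, h2, h3]
    · exact ((STcont T l).continuousOn.mul hg.continuousOn).add
        ((SdTcont T l).continuousOn.mul hf.continuousOn)
    · intro t ht
      refine (((ST_hasDeriv T t l).mul (hgd t ht)).add
        ((SdT_hasDeriv T t l).mul (hfd t ht))).congr_deriv ?_
      ring
  rw [intervalIntegral.integral_add i1 (i2.const_mul l),
    intervalIntegral.integral_const_mul] at key
  rw [e1]
  unfold cf
  linarith

lemma S_indep {N : ℕ} (lam : Fin N → ℝ) (hlam : Function.Injective lam) (T : ℝ) (hT : 0 < T)
    (a : Fin N → ℝ) (h : ∀ t ∈ Set.Ioo 0 T, ∑ j, a j * S (T - t) (lam j) = 0) : a = 0 := by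
  have hder : ∀ (F F' : ℝ → ℝ), (∀ t, HasDerivAt F (F' t) t) → (∀ t ∈ Set.Ioo 0 T, F t = 0) →
      ∀ t ∈ Set.Ioo 0 T, F' t = 0 := by
    intro F F' hF h0 t ht
    have : F =ᶠ[nhds t] fun _ => 0 := by
      filter_upwards [Ioo_mem_nhds ht.1 ht.2] with s hs using h0 s hs
    exact (hF t).unique ((hasDerivAt_const t (0:ℝ)).congr_of_eventuallyEq this)
  have hm : ∀ m : ℕ, ∀ t ∈ Set.Ioo 0 T, ∑ j, a j * lam j ^ m * S (T - t) (lam j) = 0 := by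
    intro m
    induction m with
    | zero => simpa using h
    | succ m ih =>
      have s1 := hder _ (fun t => ∑ j, a j * lam j ^ m * (-Sd (T - t) (lam j)))
        (fun t => HasDerivAt.fun_sum fun j _ => (ST_hasDeriv T t (lam j)).const_mul _) ih
      have s2 := hder _ (fun t => ∑ j, a j * lam j ^ m * (-(lam j * S (T - t) (lam j))))
        (fun t => HasDerivAt.fun_sum fun j _ => (SdT_hasDeriv T t (lam j)).neg.const_mul _) s1
      intro t ht
      rw [← neg_eq_zero, ← s2 t ht, ← Finset.sum_neg_distrib]
      refine Finset.sum_congr rfl fun j _ => by ring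
  have hz : ∀ t ∈ Set.Ioo 0 T, ∀ j, a j * S (T - t) (lam j) = 0 := by
    intro t ht
    have : (fun j => a j * S (T - t) (lam j)) = 0 := by
      apply Matrix.eq_zero_of_forall_pow_sum_mul_pow_eq_zero hlam
      intro m
      rw [← hm m t ht]
      refine Finset.sum_congr rfl fun j _ => by ring
    exact fun j => congrFun this j
  funext j
  have s1 := hder _ (fun t => a j * (-Sd (T - t) (lam j)))
        (fun t => (ST_hasDeriv T t (lam j)).const_mul _) (fun t ht => hz t ht j)
  have ht : T / 2 ∈ Set.Ioo 0 T := ⟨by linarith, by linarith⟩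
  have e1 := s1 _ ht
  have e2 := hz _ ht j
  have e3 := S_Sd_id (T - T / 2) (lam j)
  simp only [Pi.zero_apply]
  calc a j = a j * 1 := by ring
    _ = -(a j * (-Sd (T - T/2) (lam j))) * Sd (T - T/2) (lam j)
        + lam j * S (T - T/2) (lam j) * (a j * S (T - T/2) (lam j)) := by rw [← e3]; ring
    _ = 0 := by rw [e1, e2]; ring

/-- trial control. -/
noncomputable def ctl {N : ℕ} (lam : Fin N → ℝ) (T : ℝ) (a : Fin N → ℝ) (t : ℝ) : ℝ :=
  (t ^ 2 * (T - t) ^ 2) * ∑ j, a j * S (T - t) (lam j)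

lemma ctl_smooth {N : ℕ} (lam : Fin N → ℝ) (T : ℝ) (a : Fin N → ℝ) :
    ContDiff ℝ (⊤ : ℕ∞) (ctl lam T a) := by
  unfold ctl
  refine ContDiff.mul (by fun_prop) (ContDiff.sum fun j _ => contDiff_const.mul ?_)
  exact (S_contDiff (lam j)).comp (contDiff_const.sub contDiff_id)

lemma ctl_deriv {N : ℕ} (lam : Fin N → ℝ) (T : ℝ) (a : Fin N → ℝ) (t : ℝ)
    (ht : t = 0 ∨ t = T) : HasDerivAt (ctl lam T a) 0 t := by
  have h1 : HasDerivAt (fun t : ℝ => ∑ j, a j * S (T - t) (lam j)) _ t :=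
    HasDerivAt.fun_sum fun j _ => (ST_hasDeriv T t (lam j)).const_mul (a j)
  have h2 := ((hasDerivAt_id t).pow 2).mul (((hasDerivAt_id t).const_sub T).pow 2)
  refine (h2.mul h1).congr_deriv ?_
  rcases ht with rfl | rfl <;> simp

lemma exists_ctl {N : ℕ} (lam : Fin N → ℝ) (hlam : Function.Injective lam) (T : ℝ) (hT : 0 < T)
    (b : Fin N → ℝ) : ∃ a, ∀ k, cf T (lam k) (ctl lam T a) = b k := by
  have hint : ∀ k a, IntervalIntegrable (fun s => S (T - s) (lam k) * ctl lam T a s) volume 0 T :=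
    fun k a => ((STcont T (lam k)).mul (ctl_smooth lam T a).continuous).intervalIntegrable _ _
  let L : (Fin N → ℝ) →ₗ[ℝ] (Fin N → ℝ) :=
    { toFun := fun a k => cf T (lam k) (ctl lam T a)
      map_add' := by
        intro a b
        funext k
        simp only [Pi.add_apply, cf]
        rw [← intervalIntegral.integral_add (hint k a) (hint k b)]
        congr 1; funext s
        simp only [ctl, Pi.add_apply, add_mul, Finset.sum_add_distrib]; ring
      map_smul' := by
        intro c a
        funext k
        simp only [Pi.smul_apply, cf, smul_eq_mul, RingHom.id_apply]
        rw [← intervalIntegral.integral_const_mul]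
        congr 1; funext s
        simp only [ctl, Pi.smul_apply, smul_eq_mul, mul_assoc, ← Finset.mul_sum]; ring }
  have hinj : Function.Injective L := by
    rw [injective_iff_map_eq_zero]
    intro a ha
    apply S_indep lam hlam T hT
    have hk : ∀ k, cf T (lam k) (ctl lam T a) = 0 := fun k => congrFun ha k
    set u : ℝ → ℝ := fun t => ∑ j, a j * S (T - t) (lam j) with hu
    have huc : Continuous u := continuous_finsetSum _ fun j _ => continuous_const.mul (STcont T _)
    have hzero : ∫ t in (0:ℝ)..T, (t ^ 2 * (T - t) ^ 2) * u t ^ 2 = 0 := by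
      have : ∀ t, (t ^ 2 * (T - t) ^ 2) * u t ^ 2 =
          ∑ k, a k * (S (T - t) (lam k) * ctl lam T a t) := by
        intro t
        have : ctl lam T a t = (t ^ 2 * (T - t) ^ 2) * u t := rfl
        simp_rw [this, ← mul_assoc]
        rw [← Finset.sum_mul, ← Finset.sum_mul, ← Finset.sum_mul]
        change _ = u t * _ * _ * _
        ring
      simp_rw [this]
      rw [intervalIntegral.integral_finsetSum fun k _ => (hint k a).const_mul _]
      refine Finset.sum_eq_zero fun k _ => ?_
      rw [intervalIntegral.integral_const_mul]
      change a k * cf T (lam k) (ctl lam T a) = 0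
      rw [hk, mul_zero]
    intro t ht
    change u t = 0
    by_contra hne
    have hpos : 0 < ∫ t in (0:ℝ)..T, (t ^ 2 * (T - t) ^ 2) * u t ^ 2 := by
      apply intervalIntegral.integral_pos hT
      · exact Continuous.continuousOn (by fun_prop)
      · intro x _; positivity
      · refine ⟨t, Set.Ioo_subset_Icc_self ht, ?_⟩
        have h1 := ht.1
        have h2 : 0 < T - t := sub_pos.2 ht.2
        positivity
    exact hpos.ne' hzero
  obtain ⟨a, ha⟩ := (LinearMap.injective_iff_surjective.1 hinj) b
  exact ⟨a, fun k => congrFun ha k⟩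

/-- the variational principle. Over controls
`f ∈ F₀ᵀ = {f ∈ C^∞([0,T]) : f(0) = f(T) = f'(0) = f'(T) = 0}` normalized by
`⟨Cᵀf, f⟩ = 1`, the infimum of `⟨Cᵀf'', f⟩` equals `-λ_N`, the smallest eigenvalue
of `-A` (where `λ_N` is the largest eigenvalue of `A`). -/
theorem stmt13 {N : ℕ} (hN : 0 < N) (A : Matrix (Fin N) (Fin N) ℝ) (hA : IsJacobi A)
    (lam : Fin N → ℝ) (φ : Fin N → Fin N → ℝ) (ρ : Fin N → ℝ)
    (hlam : StrictMono lam)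
    (heig : ∀ k, A.mulVec (φ k) = lam k • φ k)
    (hφ1 : ∀ k, φ k ⟨0, hN⟩ = 1)
    (hρ : ∀ k, ρ k = ∑ i, φ k i * φ k i)
    (T : ℝ) (hT : 0 < T) :
    sInf {x : ℝ | ∃ f : ℝ → ℝ,
      ContDiffOn ℝ (⊤ : ℕ∞) f (Set.Icc 0 T) ∧
      f 0 = 0 ∧ f T = 0 ∧
      derivWithin f (Set.Icc 0 T) 0 = 0 ∧ derivWithin f (Set.Icc 0 T) T = 0 ∧
      (∫ t in (0:ℝ)..T, CTop lam ρ T f t * f t) = 1 ∧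
      x = ∫ t in (0:ℝ)..T, CTop lam ρ T (deriv (deriv f)) t * f t} =
    -lam ⟨N - 1, by omega⟩ := by
  have hρpos : ∀ k, 0 < ρ k := by
    intro k
    rw [hρ]
    refine Finset.sum_pos' (fun i _ => mul_self_nonneg _) ⟨⟨0, hN⟩, Finset.mem_univ _, ?_⟩
    rw [hφ1]; norm_num
  set n : Fin N := ⟨N - 1, by omega⟩ with hn
  apply IsLeast.csInf_eq
  constructor
  · obtain ⟨a, ha⟩ := exists_ctl lam hlam.injective T hT (fun k => if k = n then √(ρ n) else 0)
    have hsm := ctl_smooth lam T a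
    have hU : UniqueDiffOn ℝ (Set.Icc 0 T) := uniqueDiffOn_Icc hT
    have d0 : derivWithin (ctl lam T a) (Set.Icc 0 T) 0 = 0 :=
      (ctl_deriv lam T a 0 (Or.inl rfl)).hasDerivWithinAt.derivWithin
        (hU 0 (Set.left_mem_Icc.2 hT.le))
    have dT : derivWithin (ctl lam T a) (Set.Icc 0 T) T = 0 :=
      (ctl_deriv lam T a T (Or.inr rfl)).hasDerivWithinAt.derivWithin
        (hU T (Set.right_mem_Icc.2 hT.le))
    have z0 : ctl lam T a 0 = 0 := by simp [ctl]
    have zT : ctl lam T a T = 0 := by simp [ctl]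
    have hr : √(ρ n) * √(ρ n) = ρ n := Real.mul_self_sqrt (hρpos n).le
    have hne := (hρpos n).ne'
    refine ⟨ctl lam T a, hsm.contDiffOn, z0, zT, d0, dT, ?_, ?_⟩
    · rw [inner_CT _ _ _ hT _ _ hsm.continuous.continuousOn]
      simp only [ha]
      rw [Finset.sum_eq_single n (by intro k _ hk; simp [hk]) (by simp)]
      rw [if_pos rfl, mul_assoc, hr]; field_simp
    · rw [inner_CT _ _ _ hT _ _ hsm.continuous.continuousOn]
      simp only [cf_deriv2 T _ hT _ hsm.contDiffOn z0 zT d0 dT, ha]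
      rw [Finset.sum_eq_single n (by intro k _ hk; simp [hk]) (by simp)]
      rw [if_pos rfl]
      calc -lam n = -lam n * (1 / ρ n * ρ n) := by field_simp
        _ = _ := by rw [← hr]; rw [hr]; nth_rewrite 2 [← hr]; ring
  · rintro x ⟨f, hf, h0, h1, h2, h3, h4, rfl⟩
    rw [inner_CT _ _ _ hT _ _ hf.continuousOn] at h4 ⊢
    simp only [cf_deriv2 T _ hT f hf h0 h1 h2 h3]
    calc -lam n = -lam n * 1 := by ring
      _ = ∑ k, -lam n * (1 / ρ k * cf T (lam k) f * cf T (lam k) f) := by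
        rw [← Finset.mul_sum, h4]
      _ ≤ _ := by
        refine Finset.sum_le_sum fun k _ => ?_
        have hk : lam k ≤ lam n := hlam.monotone (by
          rw [Fin.le_def]; have := k.2; simp only [hn]; omega)
        have hp : 0 ≤ 1 / ρ k * (cf T (lam k) f * cf T (lam k) f) :=
          mul_nonneg (one_div_pos.2 (hρpos k)).le (mul_self_nonneg _)
        nlinarith [mul_nonneg (sub_nonneg.2 hk) hp]
end
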